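/- (Multiset version of the main theorem.) In the typed dinner game, fix a set L ⊆ Fin m of lout turns; the preference at turn t is the typed lout order of P t if t ∈ L, and some fixed strict partial order extending the typed knight order of P t if t ∉ L. Let σ be the permutation of Fin m listing the turns of L in increasing order followed by the turns not in L in decreasing order, and consider the all-lout typed game with turn order P ∘ σ, in which at each turn the mover selects a morsel whose type is <-maximal for her among remaining morsels. Then for every optimal play a of the mixed typed game, every greedy play b of the rearranged all-lout game, and every player i, the multiset of types τ(A_i(a)) (with turn order P) equals the multiset of types of player i's plate under b (with turn order P ∘ σ). -/

import Mathlib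

/-- The plate of player `i` under play sequence `a`, with turn order `P`. -/
def plate {M : Type*} [DecidableEq M] {m k : ℕ} (P : Fin m → Fin k) (a : Fin m → M)
    (i : Fin k) : Finset M :=
  (Finset.univ.filter fun t => P t = i).image a

/-- Pairwise comparison of plates with respect to a morsel ordering `le`. -/
def PlateLE {M : Type*} (le : M → M → Prop) (A B : Finset M) : Prop :=
  ∃ f : A → B, Function.Bijective f ∧ ∀ x : A, le x.1 (f x).1

/-- Strict pairwise comparison of plates. -/
def PlateLT {M : Type*} (le : M → M → Prop) (A B : Finset M) : Prop :=
  PlateLE le A B ∧ A ≠ B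

/-- The knight order of player `i` on play sequences. -/
def KnightLT {M : Type*} [DecidableEq M] {m k : ℕ} (P : Fin m → Fin k)
    (ord : Fin k → LinearOrder M) (i : Fin k) (a b : Fin m → M) : Prop :=
  ((∀ j, j ≠ i → PlateLE (ord j).le (plate P a j) (plate P b j)) ∧
      ∃ j, j ≠ i ∧ PlateLT (ord j).le (plate P a j) (plate P b j)) ∨
    ((∀ j, j ≠ i → plate P a j = plate P b j) ∧
      PlateLT (ord i).le (plate P a i) (plate P b i))

/-- The lout order of player `i` on play sequences. -/
def LoutLT {M : Type*} {m k : ℕ} (P : Fin m → Fin k)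
    (ord : Fin k → LinearOrder M) (i : Fin k) (a b : Fin m → M) : Prop :=
  ∃ t : Fin m, P t = i ∧ (∀ s : Fin m, s < t → a s = b s) ∧ (ord i).lt (a t) (b t)

/-- A strategy profile: assigns to each duplicate-free history of length `< m` a
morsel not occurring in it. -/
structure Strategy (M : Type*) (m : ℕ) where
  choice : List M → M
  valid : ∀ h : List M, h.Nodup → h.length < m → choice h ∉ h

/-- Iteratively extend a history by the choices prescribed by `s`. -/
def Strategy.extend {M : Type*} {m : ℕ} (s : Strategy M m) : ℕ → List M → List M
  | 0, h => h
  | j + 1, h => Strategy.extend s j (h ++ [s.choice h])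

/-- The contingent outcome of strategy profile `s` from history `h`, as a play
sequence. -/
def Strategy.play {M : Type*} {m : ℕ} (s : Strategy M m) (h : List M) : Fin m → M :=
  fun t => (s.extend (m - h.length) h).getD t.val (s.choice [])

/-- Subgame perfect equilibrium with respect to preferences `pref t` at turn `t`. -/
def SPE {M : Type*} {m : ℕ}
    (pref : Fin m → (Fin m → M) → (Fin m → M) → Prop) (s : Strategy M m) : Prop :=
  ∀ t : Fin m, ∀ h : List M, h.Nodup → h.length = t.val →
    ∀ x : M, x ∉ h → ¬ pref t (s.play h) (s.play (h ++ [x]))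

/-- Optimal plays: contingent outcomes of subgame perfect equilibria from the
empty history. -/
def OptimalPlay {M : Type*} {m : ℕ}
    (pref : Fin m → (Fin m → M) → (Fin m → M) → Prop) (a : Fin m → M) : Prop :=
  ∃ s : Strategy M m, SPE pref s ∧ a = s.play []

/-- The greedy play: at each turn `t` the mover `P t` selects her favourite
remaining morsel. -/
def IsGreedy {M : Type*} {m k : ℕ} (P : Fin m → Fin k) (ord : Fin k → LinearOrder M)
    (a : Fin m → M) : Prop :=
  Function.Injective a ∧
    ∀ t : Fin m, ∀ x : M, (∀ s : Fin m, s < t → a s ≠ x) → x ≠ a t →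
      (ord (P t)).lt x (a t)

/-- Typed pairwise comparison of plates: compare via the types of morsels. -/
def TPlateLE {M T : Type*} (le : T → T → Prop) (τ : M → T) (A B : Finset M) : Prop :=
  ∃ f : A → B, Function.Bijective f ∧ ∀ x : A, le (τ x.1) (τ (f x).1)

/-- Strict typed pairwise comparison: additionally the multisets of types differ. -/
def TPlateLT {M T : Type*} (le : T → T → Prop) (τ : M → T) (A B : Finset M) : Prop :=
  TPlateLE le τ A B ∧ A.val.map τ ≠ B.val.map τ

/-- Typed knight order of player `i`. -/
def TKnightLT {M T : Type*} [DecidableEq M] {m k : ℕ} (P : Fin m → Fin k) (τ : M → T)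
    (ord : Fin k → LinearOrder T) (i : Fin k) (a b : Fin m → M) : Prop :=
  ((∀ j, j ≠ i → TPlateLE (ord j).le τ (plate P a j) (plate P b j)) ∧
      ∃ j, j ≠ i ∧ TPlateLT (ord j).le τ (plate P a j) (plate P b j)) ∨
    ((∀ j, j ≠ i → (plate P a j).val.map τ = (plate P b j).val.map τ) ∧
      TPlateLT (ord i).le τ (plate P a i) (plate P b i))

/-- Typed lout order of player `i`. -/
def TLoutLT {M T : Type*} {m k : ℕ} (P : Fin m → Fin k) (τ : M → T)
    (ord : Fin k → LinearOrder T) (i : Fin k) (a b : Fin m → M) : Prop :=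
  ∃ t : Fin m, P t = i ∧ (∀ s : Fin m, s < t → a s = b s) ∧
    (ord i).lt (τ (a t)) (τ (b t))

/-- A greedy play of the typed all-lout game: at each turn the mover selects a
morsel whose type is maximal for her among the remaining morsels. -/
def TIsGreedy {M T : Type*} {m k : ℕ} (P : Fin m → Fin k) (τ : M → T)
    (ord : Fin k → LinearOrder T) (a : Fin m → M) : Prop :=
  Function.Injective a ∧
    ∀ t : Fin m, ∀ x : M, (∀ s : Fin m, s < t → a s ≠ x) →
      ¬ (ord (P t)).lt (τ (a t)) (τ x)

/-!
Only the multiset of types still on the table matters. Let the remaining turns be rearranged, lout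
turns first and knight turns last in reverse; the claim, for every history, is that equilibrium play
gives each player the types she would take by picking greedily in that order, and it is proved by
backward induction on the history.

A lout who moves now picks first in the rearranged order, and a favourite type is exactly what her
preference demands. A knight who moves now picks last. Adding one type to a greedy division can only
improve every plate and leaves exactly one extra type over. So a knight who takes the best type `z`
left over by the greedy division of the others hurts nobody and gets `z`; any other choice gives
each of the others at most as much, and if it hurts none of them then she ends up with some type
left over by that division, hence at most `z`.
-/

section Multiset

variable {α β : Type*}

theorem eq_and_eq_of_cons_eq_cons_of_forall_le [PartialOrder α] {x y : α} {s t : Multiset α}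
    (h : x ::ₘ s = y ::ₘ t) (hx : ∀ a ∈ s, a ≤ x) (hy : ∀ a ∈ t, a ≤ y) : x = y ∧ s = t := by
  rcases Multiset.cons_eq_cons.1 h with heq | ⟨hne, u, rfl, rfl⟩
  · exact heq
  · exact absurd (le_antisymm (hy x (Multiset.mem_cons_self x u))
      (hx y (Multiset.mem_cons_self y u))) hne

theorem exists_eq_cons_forall_le [LinearOrder α] {s : Multiset α} (hs : s ≠ 0) :
    ∃ x t, s = x ::ₘ t ∧ ∀ a ∈ t, a ≤ x := by
  obtain ⟨x, hx, hmax⟩ := Multiset.exists_max_image id hs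
  obtain ⟨t, rfl⟩ := Multiset.exists_cons_of_mem hx
  exact ⟨x, t, rfl, fun a ha => hmax a (Multiset.mem_cons_of_mem ha)⟩

theorem exists_forall₂_of_rel {r : α → β → Prop} {s : Multiset α} {t : Multiset β}
    (h : Multiset.Rel r s t) :
    ∃ (l : List α) (l' : List β), (l : Multiset α) = s ∧ (l' : Multiset β) = t ∧
      List.Forall₂ r l l' := by
  induction h with
  | zero => exact ⟨[], [], rfl, rfl, .nil⟩
  | @cons a b _ _ hab _ ih =>
    obtain ⟨l, l', rfl, rfl, hl⟩ := ih
    exact ⟨a :: l, b :: l', rfl, rfl, .cons hab hl⟩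

theorem exists_equiv_of_rel {r : α → β → Prop} {A : Finset α} {B : Finset β}
    (h : Multiset.Rel r A.val B.val) : ∃ e : A ≃ B, ∀ x : A, r x (e x) := by
  classical
  obtain ⟨l, l', hl, hl', hr⟩ := exists_forall₂_of_rel h
  have hnd : l.Nodup := Multiset.coe_nodup.1 (hl ▸ A.nodup)
  have hnd' : l'.Nodup := Multiset.coe_nodup.1 (hl' ▸ B.nodup)
  let enumA : Fin l.length ≃ A := (hnd.getEquiv l).trans <| Equiv.subtypeEquivRight fun x => by
    rw [← Finset.mem_val, ← hl, Multiset.mem_coe]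
  let enumB : Fin l'.length ≃ B := (hnd'.getEquiv l').trans <| Equiv.subtypeEquivRight fun y => by
    rw [← Finset.mem_val, ← hl', Multiset.mem_coe]
  refine ⟨enumA.symm.trans ((finCongr hr.length_eq).trans enumB), fun x => ?_⟩
  obtain ⟨n, rfl⟩ := enumA.surjective x
  have hn : enumA.symm.trans ((finCongr hr.length_eq).trans enumB) (enumA n) =
      enumB (finCongr hr.length_eq n) :=
    congrArg (fun q => enumB (finCongr hr.length_eq q)) (enumA.symm_apply_apply n)
  rw [hn]
  exact hr.get n.isLt (hr.length_eq ▸ n.isLt)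

end Multiset

section GreedyDivision

variable {ι T : Type*} [DecidableEq ι]

/-- `GreedyDivision ord Q R D F`: when the players listed in `Q` pick in turn a favourite type out
of the multiset `R`, player `i` collects the multiset `D i` and `F` is left over. -/
inductive GreedyDivision (ord : ι → LinearOrder T) :
    List ι → Multiset T → (ι → Multiset T) → Multiset T → Prop
  | nil (R : Multiset T) : GreedyDivision ord [] R 0 R
  | cons {j : ι} {Q : List ι} {x : T} {R : Multiset T} {D : ι → Multiset T} {F : Multiset T}
      (hx : ∀ y ∈ R, (ord j).le y x) (h : GreedyDivision ord Q R D F) :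
      GreedyDivision ord (j :: Q) (x ::ₘ R) (Pi.single j {x} + D) F

namespace GreedyDivision

variable {ord : ι → LinearOrder T} {i j : ι} {Q : List ι} {R F G : Multiset T}
  {D E : ι → Multiset T} {x y z w : T}

theorem exists_of_cons (h : GreedyDivision ord (j :: Q) R D F) :
    ∃ x R' D', R = x ::ₘ R' ∧ D = Pi.single j {x} + D' ∧ (∀ y ∈ R', (ord j).le y x) ∧
      GreedyDivision ord Q R' D' F := by
  cases h with
  | cons hx h => exact ⟨_, _, _, rfl, rfl, hx, h⟩

theorem unique (h : GreedyDivision ord Q R D F) (h' : GreedyDivision ord Q R E G) :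
    D = E ∧ F = G := by
  induction h generalizing E with
  | nil R =>
    cases h'
    exact ⟨rfl, rfl⟩
  | @cons j _ _ _ _ _ hx _ ih =>
    obtain ⟨x', R', E', hR, rfl, hx', h'⟩ := h'.exists_of_cons
    let _ := ord j
    obtain ⟨rfl, rfl⟩ := eq_and_eq_of_cons_eq_cons_of_forall_le hR hx hx'
    obtain ⟨rfl, rfl⟩ := ih h'
    exact ⟨rfl, rfl⟩

theorem concat (h : GreedyDivision ord Q R D (z ::ₘ F)) (hz : ∀ y ∈ F, (ord i).le y z) :
    GreedyDivision ord (Q ++ [i]) R (D + Pi.single i {z}) F := by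
  generalize hS : z ::ₘ F = S at h
  induction h with
  | nil R =>
    subst hS
    simpa using cons hz (nil F)
  | cons hx _ ih => simpa [add_assoc] using cons hx (ih hS)

theorem exists_best_leftover (ord : ι → LinearOrder T) (i : ι) (hQ : Q.length < R.card) :
    ∃ D z F, GreedyDivision ord Q R D (z ::ₘ F) ∧ ∀ y ∈ F, (ord i).le y z := by
  induction Q generalizing R with
  | nil =>
    let _ := ord i
    obtain ⟨z, F, rfl, hz⟩ := exists_eq_cons_forall_le (Multiset.card_pos.1 hQ)
    exact ⟨0, z, F, nil _, hz⟩
  | cons j Q ih =>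
    let _ := ord j
    obtain ⟨x, R, rfl, hx⟩ :=
      exists_eq_cons_forall_le (Multiset.card_pos.1 (Nat.zero_lt_of_lt hQ))
    obtain ⟨D, z, F, h, hz⟩ := ih (R := R) (by simpa using hQ)
    exact ⟨_, z, F, cons hx h, hz⟩

theorem exists_erase_leftover (h : GreedyDivision ord Q R D (z ::ₘ F)) :
    ∃ R', R = z ::ₘ R' ∧ GreedyDivision ord Q R' D F := by
  generalize hS : z ::ₘ F = S at h
  induction h with
  | nil R => exact ⟨F, hS.symm, nil F⟩
  | @cons _ _ x _ _ _ hx _ ih =>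
    obtain ⟨R', rfl, h'⟩ := ih hS
    exact ⟨x ::ₘ R', Multiset.cons_swap x z R',
      cons (fun y hy => hx y (Multiset.mem_cons_of_mem hy)) h'⟩

theorem sum_add_leftover [Fintype ι] (h : GreedyDivision ord Q R D F) : ∑ j, D j + F = R := by
  induction h with
  | nil R => simp
  | cons _ _ ih => simp [Finset.sum_add_distrib, ih]

theorem rel_single_add (hxy : (ord j).le x y) (h : Multiset.Rel (ord i).le (D i) (E i)) :
    Multiset.Rel (ord i).le ((Pi.single j {x} + D : ι → Multiset T) i)
      ((Pi.single j {y} + E : ι → Multiset T) i) := by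
  rcases eq_or_ne i j with rfl | hij
  · simpa using Multiset.Rel.cons hxy h
  · simpa [hij] using h

theorem compare_cons (h : GreedyDivision ord Q R E G) (h' : GreedyDivision ord Q (y ::ₘ R) D F) :
    (∃ w, F = w ::ₘ G) ∧ ∀ j, Multiset.Rel (ord j).le (E j) (D j) := by
  induction h generalizing y D with
  | nil R =>
    cases h'
    exact ⟨⟨y, rfl⟩, fun j => .zero⟩
  | @cons j Q x R E G hx _ ih =>
    obtain ⟨z, R', D', hR, rfl, hz, h'⟩ := h'.exists_of_cons
    rcases Multiset.cons_eq_cons.1 hR with ⟨rfl, rfl⟩ | ⟨-, S, hS, rfl⟩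
    · obtain ⟨hw, hrel⟩ := ih h'
      exact ⟨hw, fun i => rel_single_add (hz x (Multiset.mem_cons_self x R)) (hrel i)⟩
    · let _ := ord j
      obtain ⟨rfl, rfl⟩ := eq_and_eq_of_cons_eq_cons_of_forall_le hS hx
        fun a ha => hz a (Multiset.mem_cons_of_mem ha)
      obtain ⟨hw, hrel⟩ := ih h'
      exact ⟨hw, fun i => rel_single_add ((ord j).le_refl x) (hrel i)⟩

theorem cons_eq_cons_of_forall_ne [Finite ι] (h : GreedyDivision ord Q R E G)
    (h' : GreedyDivision ord Q (y ::ₘ R) D (w ::ₘ G)) (hED : ∀ j, j ≠ i → E j = D j) :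
    y ::ₘ E i = w ::ₘ D i := by
  cases nonempty_fintype ι
  have hsum : ∑ j ∈ Finset.univ.erase i, E j = ∑ j ∈ Finset.univ.erase i, D j :=
    Finset.sum_congr rfl fun j hj => hED j (Finset.ne_of_mem_erase hj)
  have hcount := h'.sum_add_leftover
  rw [← h.sum_add_leftover, ← Finset.add_sum_erase _ E (Finset.mem_univ i),
    ← Finset.add_sum_erase _ D (Finset.mem_univ i), hsum] at hcount
  simp only [← Multiset.singleton_add] at hcount ⊢
  refine add_right_cancel (b := ∑ j ∈ Finset.univ.erase i, D j + G) ?_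
  calc {y} + E i + (∑ j ∈ Finset.univ.erase i, D j + G)
      = {y} + (E i + ∑ j ∈ Finset.univ.erase i, D j + G) := by abel
    _ = D i + ∑ j ∈ Finset.univ.erase i, D j + ({w} + G) := hcount.symm
    _ = {w} + D i + (∑ j ∈ Finset.univ.erase i, D j + G) := by abel

theorem rel_cons_of_forall_ne [Finite ι] (h : GreedyDivision ord Q R E G)
    (h' : GreedyDivision ord Q (y ::ₘ R) D (z ::ₘ F)) (hz : ∀ u ∈ F, (ord i).le u z)
    (hED : ∀ j, j ≠ i → E j = D j) :
    Multiset.Rel (ord i).le (y ::ₘ E i) (z ::ₘ D i) := by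
  obtain ⟨⟨w, hw⟩, -⟩ := h.compare_cons h'
  have hwz : (ord i).le w z := by
    rcases Multiset.mem_cons.1 (hw ▸ Multiset.mem_cons_self w G) with rfl | hwF
    · exact (ord i).le_refl w
    · exact hz w hwF
  rw [h.cons_eq_cons_of_forall_ne (hw ▸ h') hED]
  exact .cons hwz (Multiset.rel_refl_of_refl_on fun u _ => (ord i).le_refl u)

end GreedyDivision

end GreedyDivision

section TypesTaken

variable {α ι T : Type*} [DecidableEq ι] (P : α → ι) (v : α → T)

/-- The multisets of types collected by the players over a list `l` of turns, when the player
`P t` takes the type `v t` at turn `t`. -/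
def typesTaken (l : List α) : ι → Multiset T :=
  (l.map fun t => Pi.single (P t) {v t}).sum

@[simp]
theorem typesTaken_nil : typesTaken P v [] = 0 := rfl

@[simp]
theorem typesTaken_cons (t : α) (l : List α) :
    typesTaken P v (t :: l) = Pi.single (P t) {v t} + typesTaken P v l := by
  simp [typesTaken]

@[simp]
theorem typesTaken_append (l l' : List α) :
    typesTaken P v (l ++ l') = typesTaken P v l + typesTaken P v l' := by
  simp [typesTaken]

theorem typesTaken_map {β : Type*} (f : β → α) (l : List β) :
    typesTaken P v (l.map f) = typesTaken (P ∘ f) (v ∘ f) l := by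
  simp [typesTaken, Function.comp_def]

theorem typesTaken_congr {v' : α → T} {l : List α} (h : ∀ t ∈ l, v t = v' t) :
    typesTaken P v l = typesTaken P v' l := by
  unfold typesTaken
  rw [List.map_congr_left fun t ht => by rw [h t ht]]

theorem typesTaken_apply (l : List α) (i : ι) :
    typesTaken P v l i = (l.filter fun t => P t = i).map v := by
  induction l with
  | nil => rfl
  | cons t l ih =>
    rcases eq_or_ne (P t) i with rfl | hti
    · simp [ih]
    · simp [ih, hti, hti.symm]

end TypesTaken

section Plates

variable {M T : Type*} {m k : ℕ} {P : Fin m → Fin k} {τ : M → T}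
  {ord : Fin k → LinearOrder T} {a b : Fin m → M} {i : Fin k}

theorem tPlateLE_of_rel {le : T → T → Prop} {A B : Finset M}
    (h : Multiset.Rel le (A.val.map τ) (B.val.map τ)) : TPlateLE le τ A B := by
  obtain ⟨e, he⟩ := exists_equiv_of_rel (Multiset.rel_map.1 h)
  exact ⟨e, e.bijective, he⟩

variable [DecidableEq M]

theorem map_plate_eq_typesTaken (ha : Function.Injective a) (i : Fin k) :
    (plate P a i).val.map τ = typesTaken P (τ ∘ a) (List.finRange m) i := by
  rw [typesTaken_apply, plate, Finset.image_val_of_injOn ha.injOn, Multiset.map_map,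
    Finset.filter_val]
  rfl

theorem tKnightLT_of_rel
    (hne : ∃ j, (plate P a j).val.map τ ≠ (plate P b j).val.map τ)
    (hothers : ∀ j, j ≠ i →
      Multiset.Rel (ord j).le ((plate P a j).val.map τ) ((plate P b j).val.map τ))
    (hself : (∀ j, j ≠ i → (plate P a j).val.map τ = (plate P b j).val.map τ) →
      Multiset.Rel (ord i).le ((plate P a i).val.map τ) ((plate P b i).val.map τ)) :
    TKnightLT P τ ord i a b := by
  by_cases hall : ∀ j, j ≠ i → (plate P a j).val.map τ = (plate P b j).val.map τ
  · obtain ⟨j, hj⟩ := hne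
    obtain rfl : j = i := by_contra fun hji => hj (hall j hji)
    exact .inr ⟨hall, tPlateLE_of_rel (hself hall), hj⟩
  · push Not at hall
    obtain ⟨j, hji, hj⟩ := hall
    exact .inl ⟨fun j hji => tPlateLE_of_rel (hothers j hji), j, hji,
      tPlateLE_of_rel (hothers j hji), hj⟩

theorem tKnightLT_of_typesTaken_eq_add (ha : Function.Injective a) (hb : Function.Injective b)
    {C A B : Fin k → Multiset T} (hA : typesTaken P (τ ∘ a) (List.finRange m) = C + A)
    (hB : typesTaken P (τ ∘ b) (List.finRange m) = C + B) (hne : A ≠ B)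
    (hothers : ∀ j, j ≠ i → Multiset.Rel (ord j).le (A j) (B j))
    (hself : (∀ j, j ≠ i → A j = B j) → Multiset.Rel (ord i).le (A i) (B i)) :
    TKnightLT P τ ord i a b := by
  have hrel_add (j : Fin k) (h : Multiset.Rel (ord j).le (A j) (B j)) :
      Multiset.Rel (ord j).le (C j + A j) (C j + B j) :=
    .add (Multiset.rel_refl_of_refl_on fun u _ => (ord j).le_refl u) h
  apply tKnightLT_of_rel <;>
    simp only [map_plate_eq_typesTaken ha, map_plate_eq_typesTaken hb, hA, hB, Pi.add_apply,
      ne_eq, add_right_inj]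
  · exact Function.ne_iff.1 hne
  · exact fun j hj => hrel_add j (hothers j hj)
  · exact fun hall => hrel_add i (hself hall)

end Plates

section Rearrangement

variable {α : Type*} [DecidableEq α] (L : Finset α)

/-- The list `l` of turns, rearranged: the turns in `L` in their given order, followed by the
others in reverse. -/
def rearrange (l : List α) : List α :=
  l.filter (· ∈ L) ++ (l.filter (· ∉ L)).reverse

/-- `s` precedes `t` once the turns are rearranged with `L` first, increasing, and the complement
of `L` last, decreasing. -/
def RearrangedBefore [LT α] (s t : α) : Prop :=
  if s ∈ L then t ∈ L → s < t else t ∉ L ∧ t < s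

variable {L} {t : α}

theorem rearrange_cons_of_mem (ht : t ∈ L) (l : List α) :
    rearrange L (t :: l) = t :: rearrange L l := by
  simp [rearrange, ht]

theorem rearrange_cons_of_notMem (ht : t ∉ L) (l : List α) :
    rearrange L (t :: l) = rearrange L l ++ [t] := by
  simp [rearrange, ht]

theorem rearrange_perm (L : Finset α) (l : List α) : (rearrange L l).Perm l := by
  refine ((List.Perm.refl _).append (List.reverse_perm _)).trans ?_
  simpa only [decide_not] using List.filter_append_perm (· ∈ L) l

theorem RearrangedBefore.asymm [Preorder α] {s : α} (hst : RearrangedBefore L s t) :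
    ¬ RearrangedBefore L t s := by
  unfold RearrangedBefore at *
  grind [lt_asymm]

theorem pairwise_rearrange [Preorder α] {l : List α} (hl : l.Pairwise (· < ·)) :
    (rearrange L l).Pairwise (RearrangedBefore L) := by
  refine List.pairwise_append.2 ⟨?_, List.pairwise_reverse.2 ?_, fun s hs t ht => ?_⟩
  · refine List.pairwise_filter.2 (hl.imp fun {s t} hst hs _ => ?_)
    simp_all [RearrangedBefore]
  · refine List.pairwise_filter.2 (hl.imp fun {s t} hst hs ht => ?_)
    simp_all [RearrangedBefore]
  · simp_all [RearrangedBefore]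

theorem rearrange_finRange {m : ℕ} {L : Finset (Fin m)} {σ : Equiv.Perm (Fin m)}
    (hσmem : ∀ u : Fin m, σ u ∈ L ↔ u.val < L.card)
    (hσinc : ∀ u v : Fin m, u < v → v.val < L.card → σ u < σ v)
    (hσdec : ∀ u v : Fin m, L.card ≤ u.val → u < v → σ v < σ u) :
    rearrange L (List.finRange m) = List.ofFn σ := by
  have hperm : (rearrange L (List.finRange m)).Perm (List.ofFn σ) := by
    rw [List.ofFn_eq_map]
    exact (rearrange_perm _ _).trans σ.map_finRange_perm.symm
  refine hperm.eq_of_pairwise (fun s t _ _ hst hts => absurd hts hst.asymm)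
    (pairwise_rearrange (List.pairwise_lt_finRange m)) (List.pairwise_ofFn.2 fun u v huv => ?_)
  unfold RearrangedBefore
  split_ifs with hu
  · exact fun hv => hσinc u v huv ((hσmem v).1 hv)
  · rw [hσmem, not_lt] at hu
    exact ⟨fun hv => absurd ((hσmem v).1 hv) (hu.trans huv.le).not_gt, hσdec u v hu huv⟩

end Rearrangement

section RemainingTypes

variable {M T : Type*} [Fintype M] [DecidableEq M] {τ : M → T} {h : List M}

/-- The multiset of types of the morsels that have not been taken after the history `h`. -/
def remainingTypes (τ : M → T) (h : List M) : Multiset T :=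
  (h.toFinset)ᶜ.val.map τ

theorem mem_remainingTypes {z : T} : z ∈ remainingTypes τ h ↔ ∃ x, x ∉ h ∧ τ x = z := by
  simp [remainingTypes]

theorem remainingTypes_eq_cons {x : M} (hx : x ∉ h) :
    remainingTypes τ h = τ x ::ₘ remainingTypes τ (h ++ [x]) := by
  have hinsert : (h.toFinset)ᶜ = insert x ((h ++ [x]).toFinset)ᶜ := by
    ext y
    by_cases hy : y = x <;> simp [hy, hx]
  rw [remainingTypes, hinsert, Finset.insert_val_of_notMem (by simp), Multiset.map_cons,
    remainingTypes]

theorem card_remainingTypes (hh : h.Nodup) :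
    (remainingTypes τ h).card = Fintype.card M - h.length := by
  rw [remainingTypes, Multiset.card_map, Finset.card_val, Finset.card_compl,
    List.toFinset_card_of_nodup hh]

end RemainingTypes

section GreedyPlay

variable {M T : Type*} {m k : ℕ} {τ : M → T} {ord : Fin k → LinearOrder T}

theorem TIsGreedy.comp_castSucc {Q : Fin (m + 1) → Fin k} {b : Fin (m + 1) → M}
    (hb : TIsGreedy Q τ ord b) : TIsGreedy (Q ∘ Fin.castSucc) τ ord (b ∘ Fin.castSucc) := by
  refine ⟨hb.1.comp (Fin.castSucc_injective m), fun t x hx => hb.2 t.castSucc x fun s hs => ?_⟩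
  obtain ⟨s, rfl⟩ := Fin.exists_castSucc_eq.2 (hs.trans (Fin.castSucc_lt_last t)).ne
  exact hx s (Fin.castSucc_lt_castSucc_iff.1 hs)

theorem TIsGreedy.greedyDivision [Fintype M] [DecidableEq M] {Q : Fin m → Fin k} {b : Fin m → M}
    (hb : TIsGreedy Q τ ord b) :
    GreedyDivision ord (List.ofFn Q) (remainingTypes τ [])
      (typesTaken Q (τ ∘ b) (List.finRange m)) (remainingTypes τ (List.ofFn b)) := by
  induction m with
  | zero => simpa using GreedyDivision.nil _
  | succ m ih =>
    have hlast_new : b (Fin.last m) ∉ List.ofFn (b ∘ Fin.castSucc) := by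
      rintro hmem
      obtain ⟨s, hs⟩ := List.mem_ofFn.1 hmem
      exact (Fin.castSucc_lt_last s).ne (hb.1 hs)
    have hlast_best : ∀ y ∈ remainingTypes τ (List.ofFn (b ∘ Fin.castSucc) ++ [b (Fin.last m)]),
        (ord (Q (Fin.last m))).le y (τ (b (Fin.last m))) := by
      intro y hy
      obtain ⟨x, hx, rfl⟩ := mem_remainingTypes.1 hy
      let _ := ord (Q (Fin.last m))
      refine not_lt.1 (hb.2 (Fin.last m) x ?_)
      rintro s hs rfl
      obtain ⟨s, rfl⟩ := Fin.exists_castSucc_eq.2 hs.ne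
      exact hx (List.mem_append_left _ (List.mem_ofFn.2 ⟨s, rfl⟩))
    have hdiv := ih hb.comp_castSucc
    rw [remainingTypes_eq_cons hlast_new] at hdiv
    simpa [List.ofFn_succ_last, List.finRange_succ_last, typesTaken_map, Function.comp_def,
      -List.ofFn_succ] using hdiv.concat hlast_best

end GreedyPlay

namespace Strategy

variable {M : Type*} {m : ℕ} (s : Strategy M m)

theorem length_extend (n : ℕ) (h : List M) : (s.extend n h).length = h.length + n := by
  induction n generalizing h with
  | zero => rfl
  | succ n ih => rw [extend, ih, List.length_append, List.length_singleton, add_assoc, add_comm 1]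

theorem prefix_extend (n : ℕ) (h : List M) : h <+: s.extend n h := by
  induction n generalizing h with
  | zero => exact List.prefix_refl h
  | succ n ih => exact (List.prefix_append _ _).trans (ih _)

theorem nodup_extend {n : ℕ} {h : List M} (hh : h.Nodup) (hn : h.length + n ≤ m) :
    (s.extend n h).Nodup := by
  induction n generalizing h with
  | zero => exact hh
  | succ n ih =>
    have hnew := s.valid h hh (by omega)
    exact ih (List.concat_eq_append ▸ hh.concat hnew) (by grind)

theorem play_injective {h : List M} (hh : h.Nodup) (hm : h.length ≤ m) :
    Function.Injective (s.play h) := by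
  intro u v huv
  have hlen := s.length_extend (m - h.length) h
  have hnodup := s.nodup_extend hh (Nat.add_sub_of_le hm).le
  simp only [play] at huv
  rw [List.getD_eq_getElem _ _ (by omega), List.getD_eq_getElem _ _ (by omega)] at huv
  exact Fin.ext (hnodup.getElem_inj_iff.1 huv)

theorem play_concat_injective {h : List M} (hh : h.Nodup) (hm : h.length < m) {x : M}
    (hx : x ∉ h) : Function.Injective (s.play (h ++ [x])) :=
  s.play_injective (List.concat_eq_append ▸ hh.concat hx) (by simpa using hm)

theorem play_eq_getElem {h : List M} {t : Fin m} (ht : t.val < h.length) :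
    s.play h t = h[t.val] := by
  have hpre := s.prefix_extend (m - h.length) h
  rw [play, List.getD_eq_getElem _ _ (ht.trans_le hpre.length_le), hpre.getElem ht]

theorem play_concat_choice {h : List M} (hm : h.length < m) :
    s.play (h ++ [s.choice h]) = s.play h := by
  have hsucc : m - h.length = m - (h ++ [s.choice h]).length + 1 := by grind
  unfold play
  rw [hsucc, extend]

theorem play_concat_apply_self {h : List M} {t : Fin m} (ht : h.length = t) (x : M) :
    s.play (h ++ [x]) t = x := by
  rw [s.play_eq_getElem (by simp [ht])]
  simp [← ht]

theorem play_apply_self {h : List M} {t : Fin m} (ht : h.length = t) : s.play h t = s.choice h := by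
  rw [← s.play_concat_choice (ht ▸ t.isLt), s.play_concat_apply_self ht]

theorem play_concat_apply_of_lt {h : List M} {t u : Fin m} (ht : h.length = t) (hu : u < t)
    (x : M) : s.play (h ++ [x]) u = s.play h u := by
  have hu : u.val < h.length := ht ▸ hu
  rw [s.play_eq_getElem hu, s.play_eq_getElem (by grind), List.getElem_append_left hu]

end Strategy

section Equilibrium

variable {M T : Type*} {m k : ℕ} {P : Fin m → Fin k} {τ : M → T} {ord : Fin k → LinearOrder T}
  {L : Finset (Fin m)} {s : Strategy M m} {h : List M} {t : Fin m}

theorem drop_finRange_eq_cons (t : Fin m) :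
    (List.finRange m).drop t = t :: (List.finRange m).drop (t + 1) := by
  rw [List.drop_eq_getElem_cons (by simp)]
  simp

theorem typesTaken_play_concat (ht : h.length = t) (x : M) :
    typesTaken P (τ ∘ s.play (h ++ [x])) (List.finRange m) =
      typesTaken P (τ ∘ s.play h) ((List.finRange m).take t) +
        (Pi.single (P t) {τ x} +
          typesTaken P (τ ∘ s.play (h ++ [x])) ((List.finRange m).drop (t + 1))) := by
  have hpast : typesTaken P (τ ∘ s.play (h ++ [x])) ((List.finRange m).take t) =
      typesTaken P (τ ∘ s.play h) ((List.finRange m).take t) := by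
    refine typesTaken_congr _ _ fun u hu => ?_
    obtain ⟨n, hn, rfl⟩ := List.mem_take_iff_getElem.1 hu
    have hnt : n < t := by omega
    exact congrArg τ (s.play_concat_apply_of_lt ht (by simpa [Fin.lt_def] using hnt) x)
  conv_lhs => rw [← List.take_append_drop t (List.finRange m)]
  rw [typesTaken_append, hpast, drop_finRange_eq_cons, typesTaken_cons, Function.comp_apply,
    s.play_concat_apply_self ht]

section Fintype

variable [Fintype M] [DecidableEq M]

/-- From the history `h` on, `s` gives every player the types that she would collect if the
remaining turns were rearranged, lout turns `L` first, and everyone picked greedily. -/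
def Strategy.DividesGreedily (s : Strategy M m) (P : Fin m → Fin k) (τ : M → T)
    (ord : Fin k → LinearOrder T) (L : Finset (Fin m)) (h : List M) : Prop :=
  ∃ F, GreedyDivision ord ((rearrange L ((List.finRange m).drop h.length)).map P)
    (remainingTypes τ h) (typesTaken P (τ ∘ s.play h) ((List.finRange m).drop h.length)) F

theorem Strategy.dividesGreedily_concat_iff (ht : h.length = t) {x : M} :
    s.DividesGreedily P τ ord L (h ++ [x]) ↔
      ∃ F, GreedyDivision ord ((rearrange L ((List.finRange m).drop (t + 1))).map P)
        (remainingTypes τ (h ++ [x]))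
        (typesTaken P (τ ∘ s.play (h ++ [x])) ((List.finRange m).drop (t + 1))) F := by
  rw [DividesGreedily, List.length_append, List.length_singleton, ht]

theorem Strategy.dividesGreedily_of_lout_turn (hh : h.Nodup) (ht : h.length = t) (htL : t ∈ L)
    (hopt : ∀ x ∉ h, ¬ TLoutLT P τ ord (P t) (s.play h) (s.play (h ++ [x])))
    (ih : ∀ x ∉ h, s.DividesGreedily P τ ord L (h ++ [x])) :
    s.DividesGreedily P τ ord L h := by
  have hm : h.length < m := ht ▸ t.isLt
  have hnew := s.valid h hh hm
  have hbest : ∀ y ∈ remainingTypes τ (h ++ [s.choice h]), (ord (P t)).le y (τ (s.choice h)) := by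
    intro y hy
    obtain ⟨x, hx, rfl⟩ := mem_remainingTypes.1 hy
    have hxh : x ∉ h := fun hxh => hx (List.mem_append_left _ hxh)
    let _ := ord (P t)
    refine not_lt.1 fun hlt => hopt x hxh
      ⟨t, rfl, fun u hu => (s.play_concat_apply_of_lt ht hu x).symm, ?_⟩
    rwa [s.play_apply_self ht, s.play_concat_apply_self ht]
  obtain ⟨F, hF⟩ := (dividesGreedily_concat_iff ht).1 (ih _ hnew)
  rw [s.play_concat_choice hm] at hF
  refine ⟨F, ?_⟩
  rw [ht, drop_finRange_eq_cons, rearrange_cons_of_mem htL, List.map_cons, typesTaken_cons,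
    Function.comp_apply, s.play_apply_self ht, remainingTypes_eq_cons hnew]
  exact .cons hbest hF

theorem Strategy.exists_deviation_of_leftover (ht : h.length = t)
    (ih : ∀ x ∉ h, s.DividesGreedily P τ ord L (h ++ [x])) {D : Fin k → Multiset T} {z : T}
    {F : Multiset T}
    (hD : GreedyDivision ord ((rearrange L ((List.finRange m).drop (t + 1))).map P)
      (remainingTypes τ h) D (z ::ₘ F)) :
    ∃ x ∉ h, τ x = z ∧
      typesTaken P (τ ∘ s.play (h ++ [x])) ((List.finRange m).drop (t + 1)) = D := by
  obtain ⟨R, hR, hD'⟩ := hD.exists_erase_leftover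
  obtain ⟨x, hx, rfl⟩ := mem_remainingTypes.1 (hR ▸ Multiset.mem_cons_self z R)
  obtain ⟨G, hG⟩ := (dividesGreedily_concat_iff ht).1 (ih x hx)
  rw [remainingTypes_eq_cons hx, Multiset.cons_inj_right] at hR
  exact ⟨x, hx, rfl, (hG.unique (hR ▸ hD')).1⟩

theorem Strategy.typesTaken_eq_of_knight_turn (hh : h.Nodup) (ht : h.length = t)
    (hopt : ∀ x ∉ h, ¬ TKnightLT P τ ord (P t) (s.play h) (s.play (h ++ [x])))
    (ih : ∀ x ∉ h, s.DividesGreedily P τ ord L (h ++ [x])) {D : Fin k → Multiset T} {z : T}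
    {F : Multiset T}
    (hD : GreedyDivision ord ((rearrange L ((List.finRange m).drop (t + 1))).map P)
      (remainingTypes τ h) D (z ::ₘ F))
    (hz : ∀ y ∈ F, (ord (P t)).le y z) :
    typesTaken P (τ ∘ s.play h) ((List.finRange m).drop t) = Pi.single (P t) {z} + D := by
  have hm : h.length < m := ht ▸ t.isLt
  have hnew := s.valid h hh hm
  obtain ⟨x, hx, rfl, hxD⟩ := exists_deviation_of_leftover ht ih hD
  obtain ⟨G, hG⟩ := (dividesGreedily_concat_iff ht).1 (ih _ hnew)
  have hplay := typesTaken_play_concat (s := s) (P := P) (τ := τ) ht (s.choice h)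
  have hplay' := typesTaken_play_concat (s := s) (P := P) (τ := τ) ht x
  rw [s.play_concat_choice hm] at hG hplay
  rw [hxD] at hplay'
  rw [remainingTypes_eq_cons hnew] at hD
  rw [drop_finRange_eq_cons, typesTaken_cons, Function.comp_apply, s.play_apply_self ht]
  by_contra hne
  refine hopt x hx (tKnightLT_of_typesTaken_eq_add (s.play_injective hh hm.le)
    (s.play_concat_injective hh hm hx) hplay hplay' hne (fun j hj => ?_) fun hall => ?_)
  · simpa [hj] using (hG.compare_cons hD).2 j
  · simpa using hG.rel_cons_of_forall_ne hD hz fun j hj => by simpa [hj] using hall j hj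

theorem Strategy.dividesGreedily_of_knight_turn (hm : m ≤ Fintype.card M) (hh : h.Nodup)
    (ht : h.length = t) (htL : t ∉ L)
    (hopt : ∀ x ∉ h, ¬ TKnightLT P τ ord (P t) (s.play h) (s.play (h ++ [x])))
    (ih : ∀ x ∉ h, s.DividesGreedily P τ ord L (h ++ [x])) :
    s.DividesGreedily P τ ord L h := by
  have hcard : ((rearrange L ((List.finRange m).drop (t + 1))).map P).length <
      (remainingTypes τ h).card := by
    rw [List.length_map, (rearrange_perm _ _).length_eq, List.length_drop, List.length_finRange,
      card_remainingTypes hh]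
    omega
  obtain ⟨D, z, F, hD, hz⟩ := GreedyDivision.exists_best_leftover ord (P t) hcard
  refine ⟨F, ?_⟩
  rw [ht, typesTaken_eq_of_knight_turn hh ht hopt ih hD hz, drop_finRange_eq_cons,
    rearrange_cons_of_notMem htL, List.map_append, add_comm _ D]
  exact hD.concat hz

theorem SPE.dividesGreedily {pref : Fin m → (Fin m → M) → (Fin m → M) → Prop} (hs : SPE pref s)
    (hm : m ≤ Fintype.card M)
    (hlout : ∀ t ∈ L, ∀ a b : Fin m → M, Function.Injective a → Function.Injective b →
      TLoutLT P τ ord (P t) a b → pref t a b)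
    (hknight : ∀ t ∉ L, ∀ a b : Fin m → M, Function.Injective a → Function.Injective b →
      TKnightLT P τ ord (P t) a b → pref t a b)
    (hh : h.Nodup) (hlen : h.length ≤ m) : s.DividesGreedily P τ ord L h := by
  induction hr : m - h.length generalizing h with
  | zero =>
    have hdrop : (List.finRange m).drop h.length = [] :=
      List.drop_eq_nil_iff.2 (by rw [List.length_finRange]; omega)
    refine ⟨remainingTypes τ h, ?_⟩
    rw [hdrop]
    exact .nil _
  | succ n ih =>
    obtain ⟨t, ht⟩ : ∃ t : Fin m, h.length = t := ⟨⟨h.length, by omega⟩, rfl⟩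
    have hinj := s.play_injective hh hlen
    have hinj' (x : M) (hx : x ∉ h) := s.play_concat_injective hh (ht ▸ t.isLt) hx
    have hrest (x : M) (hx : x ∉ h) : s.DividesGreedily P τ ord L (h ++ [x]) :=
      ih (List.concat_eq_append ▸ hh.concat hx) (by grind) (by grind)
    by_cases htL : t ∈ L
    · exact Strategy.dividesGreedily_of_lout_turn hh ht htL
        (fun x hx hlt => hs t h hh ht x hx (hlout t htL _ _ hinj (hinj' x hx) hlt)) hrest
    · exact Strategy.dividesGreedily_of_knight_turn hm hh ht htL
        (fun x hx hlt => hs t h hh ht x hx (hknight t htL _ _ hinj (hinj' x hx) hlt)) hrest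

end Fintype

theorem typed_mixed_game_division_general [Finite M] [DecidableEq M] {σ : Equiv.Perm (Fin m)}
    (hσmem : ∀ u : Fin m, σ u ∈ L ↔ u.val < L.card)
    (hσinc : ∀ u v : Fin m, u < v → v.val < L.card → σ u < σ v)
    (hσdec : ∀ u v : Fin m, L.card ≤ u.val → u < v → σ v < σ u)
    {pref : Fin m → (Fin m → M) → (Fin m → M) → Prop}
    (hlout : ∀ t ∈ L, ∀ a b : Fin m → M, Function.Injective a → Function.Injective b →
      TLoutLT P τ ord (P t) a b → pref t a b)
    (hknight : ∀ t ∉ L, ∀ a b : Fin m → M, Function.Injective a → Function.Injective b →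
      TKnightLT P τ ord (P t) a b → pref t a b)
    {a b : Fin m → M} (hb : TIsGreedy (P ∘ σ) τ ord b) (ha : OptimalPlay pref a) (i : Fin k) :
    (plate P a i).val.map τ = (plate (P ∘ σ) b i).val.map τ := by
  obtain ⟨s, hs, rfl⟩ := ha
  cases nonempty_fintype M
  have hm : m ≤ Fintype.card M := by simpa using Fintype.card_le_of_injective b hb.1
  obtain ⟨F, hF⟩ := hs.dividesGreedily hm hlout hknight List.nodup_nil (Nat.zero_le m)
  rw [List.length_nil, List.drop_zero, rearrange_finRange hσmem hσinc hσdec, List.map_ofFn] at hF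
  rw [map_plate_eq_typesTaken (s.play_injective List.nodup_nil (Nat.zero_le m)),
    map_plate_eq_typesTaken hb.1, (hF.unique hb.greedyDivision).1]

end Equilibrium

/-- multiset version of the main theorem: in the typed mixed game,
every optimal play gives each player a plate with the same multiset of types as
any greedy play of the rearranged all-lout typed game. -/
theorem typed_mixed_game_division {M T : Type*} [Fintype M] [DecidableEq M]
    [Fintype T] [DecidableEq T] {m k : ℕ}
    (hm : m ≤ Fintype.card M) (τ : M → T) (P : Fin m → Fin k)
    (ord : Fin k → LinearOrder T)
    (L : Finset (Fin m)) (σ : Equiv.Perm (Fin m))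
    (hσmem : ∀ u : Fin m, σ u ∈ L ↔ u.val < L.card)
    (hσinc : ∀ u v : Fin m, u < v → v.val < L.card → σ u < σ v)
    (hσdec : ∀ u v : Fin m, L.card ≤ u.val → u < v → σ v < σ u)
    (big : Fin m → (Fin m → M) → (Fin m → M) → Prop)
    (hirr : ∀ t ∉ L, ∀ a : Fin m → M, Function.Injective a → ¬ big t a a)
    (htrans : ∀ t ∉ L, ∀ a b c : Fin m → M, Function.Injective a →
      Function.Injective b → Function.Injective c → big t a b → big t b c → big t a c)
    (hext : ∀ t ∉ L, ∀ a b : Fin m → M, Function.Injective a → Function.Injective b →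
      TKnightLT P τ ord (P t) a b → big t a b)
    (b : Fin m → M) (hb : TIsGreedy (P ∘ σ) τ ord b)
    (a : Fin m → M)
    (ha : OptimalPlay (fun t => if t ∈ L then TLoutLT P τ ord (P t) else big t) a) :
    ∀ i : Fin k, (plate P a i).val.map τ = (plate (P ∘ σ) b i).val.map τ := by
  exact typed_mixed_game_division_general hσmem hσinc hσdec
    (fun t ht _ _ _ _ h => by simpa only [if_pos ht] using h)
    (fun t ht _ _ h₁ h₂ h => by simpa only [if_neg ht] using hext t ht _ _ h₁ h₂ h) hb ha
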